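/- Let (M, Ω) be a 2n-dimensional symplectic manifold and let ∇ be a symplectically flat symplectic connection, i.e. its symplectic Weyl tensor vanishes and ∇_{(i}R_{jk)} = 0. Then the following are equivalent: (1) the curvature one-form ρ_i = ∇^p R_{ip} vanishes; (2) the Ricci tensor is parallel; (3) ∇ is locally symmetric (∇R = 0). Moreover, when these hold, the Ricci endomorphism R_i{}^j satisfies R_j{}^p R_p{}^i = −r δ_j{}^i, where 2nr = R_{pq}R^{pq} is constant. -/

import Mathlib

/- Chart model of a symplectic manifold: the manifold is modeled by (a global affine chart of)
a finite-dimensional real normed vector space `E`; a symplectic form is a smooth field of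
nondegenerate antisymmetric bilinear forms (closedness is automatic in the presence of a
compatible torsion-free connection), and a symplectic connection is recorded by its
(torsion-free) Christoffel symbols, preserving the symplectic form. -/

structure SympForm (E : Type*) [NormedAddCommGroup E] [NormedSpace ℝ E] where
  ω : E → E →L[ℝ] E →L[ℝ] ℝ
  smooth : ContDiff ℝ (⊤ : ℕ∞) ω
  skew : ∀ x u v, ω x u v = - ω x v u
  nondeg : ∀ x u, (∀ v, ω x u v = 0) → u = 0

structure SympConnection {E : Type*} [NormedAddCommGroup E] [NormedSpace ℝ E]
    (Ω : SympForm E) where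
  Γ : E → E →L[ℝ] E →L[ℝ] E
  smooth : ContDiff ℝ (⊤ : ℕ∞) Γ
  symm : ∀ x u v, Γ x u v = Γ x v u
  parallel : ∀ x u v w, fderiv ℝ Ω.ω x u v w = Ω.ω x (Γ x u v) w + Ω.ω x v (Γ x u w)

variable {E : Type*} [NormedAddCommGroup E] [NormedSpace ℝ E]

/-- Curvature `R(u,v)w = ∇_u∇_v w - ∇_v∇_u w - ∇_{[u,v]}w` of a symplectic connection,
evaluated on constant vector fields of the chart, as an operator in `w`. -/
noncomputable def curvOp {Ω : SympForm E} (C : SympConnection Ω) (x u v : E) : E →L[ℝ] E :=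
  fderiv ℝ C.Γ x u v - fderiv ℝ C.Γ x v u
    + (C.Γ x u).comp (C.Γ x v) - (C.Γ x v).comp (C.Γ x u)

/-- Lowered curvature `R_{ijkl} = R_{ijk}{}^p Ω_{pl}`, i.e. `Ω(R(u,v)w, z)`. -/
noncomputable def Rlow {Ω : SympForm E} (C : SympConnection Ω) (x u v w z : E) : ℝ :=
  Ω.ω x (curvOp C x u v w) z

/-- The symplectic curvature quadratic form `scurv_{x,L}(Z)` of the plane `L` spanned by `X, Y`. -/
noncomputable def scurv {Ω : SympForm E} (C : SympConnection Ω) (x X Y Z : E) : ℝ :=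
  Rlow C x X Y Z Z / Ω.ω x X Y

/-- Ricci tensor `R_{ij} = R_{pij}{}^p`: the trace of `w ↦ R(w,u)v`. -/
noncomputable def ricci {Ω : SympForm E} (C : SympConnection Ω) (x u v : E) : ℝ :=
  LinearMap.trace ℝ E
    ((((fderiv ℝ C.Γ x).flip u).flip v - ((fderiv ℝ C.Γ x) u).flip v
      + (C.Γ x).flip (C.Γ x u v) - (C.Γ x u).comp ((C.Γ x).flip v)).toLinearMap)

/-- Covariant derivative `(∇_w Ric)(u,v)` of the Ricci tensor. -/
noncomputable def covDerivRic {Ω : SympForm E} (C : SympConnection Ω) (x w u v : E) : ℝ :=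
  fderiv ℝ (fun y => ricci C y u v) x w - ricci C x (C.Γ x w u) v - ricci C x u (C.Γ x w v)

/-- Covariant derivative `(∇_a R)(u,v,w,z)` of the (lowered) curvature tensor. -/
noncomputable def covDerivR {Ω : SympForm E} (C : SympConnection Ω) (x a u v w z : E) : ℝ :=
  fderiv ℝ (fun y => Rlow C y u v w z) x a
    - Rlow C x (C.Γ x a u) v w z - Rlow C x u (C.Γ x a v) w z
    - Rlow C x u v (C.Γ x a w) z - Rlow C x u v w (C.Γ x a z)

/-- `∇` is locally symmetric: `∇R = 0`. -/
def LocallySymmetric {Ω : SympForm E} (C : SympConnection Ω) : Prop :=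
  ∀ x a u v w z, covDerivR C x a u v w z = 0

/-- The Ricci tensor is parallel. -/
def ParallelRicci {Ω : SympForm E} (C : SympConnection Ω) : Prop :=
  ∀ x w u v, covDerivRic C x w u v = 0

/-- The symplectic Weyl tensor
`W_{ijkl} = R_{ijkl} − (1/(n+1))(Ω_{i(k}R_{l)j} − Ω_{j(k}R_{l)i} + Ω_{ij}R_{kl})`
on a manifold of dimension `2n`. -/
noncomputable def weyl (n : ℕ) {Ω : SympForm E} (C : SympConnection Ω) (x u v w z : E) : ℝ :=
  Rlow C x u v w z - (1 / ((n : ℝ) + 1)) *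
    ((Ω.ω x u w * ricci C x z v + Ω.ω x u z * ricci C x w v) / 2
      - (Ω.ω x v w * ricci C x z u + Ω.ω x v z * ricci C x w u) / 2
      + Ω.ω x u v * ricci C x w z)

/-- `∇` is Weyl flat (of Ricci type): its symplectic Weyl tensor vanishes. -/
def WeylFlat (n : ℕ) {Ω : SympForm E} (C : SympConnection Ω) : Prop :=
  ∀ x u v w z, weyl n C x u v w z = 0

/-- `∇` is preferred: `∇_{(i}R_{jk)} = 0` (cyclic symmetrization suffices since `Ric` is
symmetric in its last two arguments). -/
def Preferred {Ω : SympForm E} (C : SympConnection Ω) : Prop :=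
  ∀ x u v w, covDerivRic C x u v w + covDerivRic C x v w u + covDerivRic C x w u v = 0

/-- Vanishing of the curvature one-form `ρ_i = ∇^p R_{ip}`: the index is raised with `Ω`, and
the `Ω`-contraction is encoded as the trace of any linear packaging `D` of `∇Ric` against `Ω`
(such a `D` exists and is unique by nondegeneracy of `Ω`). -/
def RhoZero {Ω : SympForm E} (C : SympConnection Ω) : Prop :=
  ∀ x u, ∀ D : E →ₗ[ℝ] E,
    (∀ w v, Ω.ω x (D w) v = covDerivRic C x w u v) → LinearMap.trace ℝ E D = 0

/-- `A` is a parallel symmetric covariant 2-tensor field. -/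
def IsParallelSym2 {Ω : SympForm E} (C : SympConnection Ω)
    (A : E → E →L[ℝ] E →L[ℝ] ℝ) : Prop :=
  (∀ x u v, A x u v = A x v u) ∧ Differentiable ℝ A ∧
    ∀ x u v w, fderiv ℝ A x u v w = A x (C.Γ x u v) w + A x v (C.Γ x u w)

/-- `∇` has constant symplectic sectional curvature: there is a parallel symmetric 2-tensor `A`
such that on every 2-dimensional symplectic subspace (spanned by `X, Y` with `Ω(X,Y) ≠ 0`)
the symplectic curvature quadratic form is the restriction of the quadratic form of `A`. -/
def HasConstScurv {Ω : SympForm E} (C : SympConnection Ω) : Prop :=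
  ∃ A : E → E →L[ℝ] E →L[ℝ] ℝ, IsParallelSym2 C A ∧
    ∀ x X Y, Ω.ω x X Y ≠ 0 →
      ∀ Z ∈ Submodule.span ℝ ({X, Y} : Set E), scurv C x X Y Z = A x Z Z

/-- Lie bracket of vector fields on the chart. -/
noncomputable def lieVF (X Y : E → E) (x : E) : E :=
  fderiv ℝ Y x (X x) - fderiv ℝ X x (Y x)

/-- Covariant derivative `∇_X Y` of vector fields on the chart. -/
noncomputable def covVF {Ω : SympForm E} (C : SympConnection Ω) (X Y : E → E) (x : E) : E :=
  fderiv ℝ Y x (X x) + C.Γ x (X x) (Y x)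

/-- Nijenhuis tensor of an endomorphism field, evaluated on constant vector fields. -/
noncomputable def nijTensor (A : E → E → E) (x u v : E) : E :=
  lieVF (fun y => A y u) (fun y => A y v) x
    - A x (lieVF (fun y => A y u) (fun _ => v) x)
    - A x (lieVF (fun _ => u) (fun y => A y v) x)
    + A x (A x (lieVF (fun _ => u) (fun _ => v) x))

/-- Covariant derivative along a curve `γ` of a field `V` along `γ`. -/
noncomputable def covAlong {Ω : SympForm E} (C : SympConnection Ω) (γ V : ℝ → E) (t : ℝ) : E :=
  deriv V t + C.Γ (γ t) (deriv γ t) (V t)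

/-- `(g,J,Ω)` has constant (para-)holomorphic sectional curvature `4c`:
`R_{ijkl} = 2c(Ω_{i(k}g_{l)j} − Ω_{j(k}g_{l)i} + Ω_{ij}g_{kl})`. -/
def ConstHoloSec {Ω : SympForm E} (C : SympConnection Ω) (g : E → E → E → ℝ) (c : ℝ) : Prop :=
  ∀ x u v w z, Rlow C x u v w z =
    2 * c * ((Ω.ω x u w * g x z v + Ω.ω x u z * g x w v) / 2
      - (Ω.ω x v w * g x z u + Ω.ω x v z * g x w u) / 2
      + Ω.ω x u v * g x w z)

/-- `C` is the Levi-Civita connection of the metric `g`: `C` is torsion free and `∇g = 0`. -/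
def IsLeviCivita {Ω : SympForm E} (C : SympConnection Ω) (g : E → E → E → ℝ) : Prop :=
  ∀ x u v w, fderiv ℝ (fun y => g y v w) x u = g x (C.Γ x u v) w + g x v (C.Γ x u w)

/-!
Let `A` be the Ricci endomorphism. When the symplectic Weyl tensor vanishes, the curvature is a
nonzero constant multiple of a tensor `K_A` that is linear in `A`, and the Ricci contraction of
`K_A` is a nonzero multiple of `A`. Since `∇R` is the same multiple of `K_{∇A}`, it vanishes exactly
when `∇A` does.

Contracting the second Bianchi identity for `R = c K_A` expresses the part of `∇Ric` that is
antisymmetric in the differentiation index through `ρ`. So if `ρ = 0`, then `∇Ric` is totally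
symmetric, and the preferred condition kills it; conversely `ρ` is a trace of `∇A`.

If `Ric` is parallel, the Ricci identity says that `A` commutes with the operators `R(u, v)`, hence
with `K_A(u, v)`; tracing this over `u` gives `dim · A² = tr(A²) · 1`. Finally `tr(A²)` is constant,
because `∂A` is the commutator `[A, Γ]`.
-/

section Algebra

variable {K V : Type*} [Field K] [AddCommGroup V] [Module K V]

theorem isSkewAdjoint_iff_of_isAlt {ω : LinearMap.BilinForm K V} {A : Module.End K V}
    (halt : ω.IsAlt) : ω.IsSkewAdjoint A ↔ ∀ u v, ω (A u) v = ω (A v) u := by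
  refine forall₂_congr fun u v => ?_
  rw [Pi.neg_apply, map_neg, halt.neg_eq]

/-- The algebraic curvature tensor of Ricci type built from a skew-adjoint `A`. When the symplectic
Weyl tensor vanishes, `R(u, v)w` is `1 / (2 * (n + 1))` times this tensor for `A` the Ricci
endomorphism; the factor `2` avoids halves in the symmetrizations. -/
def ricciTypeTensor (ω : LinearMap.BilinForm K V) (A : Module.End K V) (u v w : V) : V :=
  ω u w • A v + ω (A w) v • u - ω v w • A u - ω (A w) u • v + (2 * ω u v) • A w

/-- The endomorphism `u ↦ ricciTypeTensor ω A u v w`, whose trace is the Ricci contraction. -/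
def ricciTypeTensorLeft (ω : LinearMap.BilinForm K V) (A : Module.End K V) (v w : V) :
    Module.End K V :=
  (ω.flip w).smulRight (A v) + ω (A w) v • 1 - ω v w • A - (ω (A w)).smulRight v
    + (2 : K) • (ω.flip v).smulRight (A w)

variable {ω : LinearMap.BilinForm K V} {A : Module.End K V}

theorem ricciTypeTensorLeft_apply (u v w : V) :
    ricciTypeTensorLeft ω A v w u = ricciTypeTensor ω A u v w := by
  simp [ricciTypeTensorLeft, ricciTypeTensor, mul_smul]

theorem ricciTypeTensor_swap (halt : ω.IsAlt) (u v w : V) :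
    ricciTypeTensor ω A u v w = -ricciTypeTensor ω A v u w := by
  simp only [ricciTypeTensor, ← halt.neg_eq v u]
  module

variable [FiniteDimensional K V]

theorem trace_eq_of_isAdjointPair {A' : Module.End K V} (hω : ω.Nondegenerate)
    (h : ω.IsAdjointPair ω A A') : LinearMap.trace K V A = LinearMap.trace K V A' := by
  have hconj : (ω.toDual hω).conj A = Module.Dual.transpose A' := by
    ext φ v
    obtain ⟨u, rfl⟩ := (ω.toDual hω).surjective φ
    simpa [Module.Dual.transpose_apply, LinearMap.BilinForm.toDual_def] using h u v
  rw [← LinearMap.trace_conj' A (ω.toDual hω), hconj, LinearMap.trace_transpose']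

theorem finrank_smul_sq_eq_trace_smul_one (hω : ω.Nondegenerate) (halt : ω.IsAlt)
    (hA : ω.IsSkewAdjoint A)
    (hcomm : ∀ u v w, A (ricciTypeTensor ω A u v w) = ricciTypeTensor ω A u v (A w)) :
    (Module.finrank K V : K) • (A * A) = LinearMap.trace K V (A * A) • 1 := by
  have hsymm := (isSkewAdjoint_iff_of_isAlt halt).1 hA
  have hskew : ∀ u v, ω v u = -ω u v := fun u v => (halt.neg_eq u v).symm
  have hcancel : ∀ v w, ω (A (A w)) v • 1 - (ω (A (A w))).smulRight v =
      (ω.flip w).smulRight (A (A v)) - ω v w • (A * A) := fun v w => by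
    ext u
    have h := hcomm u v w
    simp only [ricciTypeTensor, map_add, map_sub, map_smul, hskew (A w) u, hskew (A w) v] at h
    simp only [LinearMap.sub_apply, LinearMap.smul_apply, LinearMap.smulRight_apply,
      LinearMap.BilinForm.flip_apply, Module.End.one_apply, Module.End.mul_apply]
    linear_combination (norm := module) -h
  ext v
  rw [← sub_eq_zero]
  refine hω.1 _ fun w => ?_
  have hsq : ω (A (A w)) v = -ω (A (A v)) w := by
    rw [hsymm, hskew (A w), hsymm]
  have htrace := congrArg (LinearMap.trace K V) (hcancel v w)
  simp only [map_sub, map_smul, LinearMap.trace_smulRight, LinearMap.trace_one,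
    LinearMap.BilinForm.flip_apply, smul_eq_mul, hsq] at htrace
  simp only [LinearMap.smul_apply, Module.End.one_apply, Module.End.mul_apply, map_sub, map_smul,
    LinearMap.sub_apply, smul_eq_mul]
  linear_combination -htrace

variable [CharZero K]

theorem trace_eq_zero_of_isSkewAdjoint (hω : ω.Nondegenerate) (hA : ω.IsSkewAdjoint A) :
    LinearMap.trace K V A = 0 := by
  have h : LinearMap.trace K V A = LinearMap.trace K V (-A) := trace_eq_of_isAdjointPair hω hA
  rw [map_neg] at h
  exact self_eq_neg.1 h

theorem trace_ricciTypeTensorLeft (hω : ω.Nondegenerate) (halt : ω.IsAlt)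
    (hA : ω.IsSkewAdjoint A) (v w : V) :
    LinearMap.trace K V (ricciTypeTensorLeft ω A v w) = (Module.finrank K V + 2) * ω (A v) w := by
  have hsymm := (isSkewAdjoint_iff_of_isAlt halt).1 hA w v
  simp only [ricciTypeTensorLeft, map_add, map_sub, map_smul, LinearMap.trace_smulRight,
    LinearMap.trace_one, trace_eq_zero_of_isSkewAdjoint hω hA, LinearMap.BilinForm.flip_apply,
    hsymm, smul_eq_mul]
  ring

theorem eq_zero_of_ricciTypeTensor_eq_zero (hω : ω.Nondegenerate) (halt : ω.IsAlt)
    (hA : ω.IsSkewAdjoint A) (h : ∀ u v w, ricciTypeTensor ω A u v w = 0) : A = 0 := by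
  ext v
  refine hω.1 _ fun w => ?_
  have hleft : ricciTypeTensorLeft ω A v w = 0 :=
    LinearMap.ext fun u => (ricciTypeTensorLeft_apply u v w).trans (h u v w)
  have htrace := trace_ricciTypeTensorLeft hω halt hA v w
  rw [hleft, map_zero, zero_eq_mul] at htrace
  exact htrace.resolve_left (by norm_cast)

theorem contracted_bianchi {S : V →ₗ[K] Module.End K V}
    (hω : ω.Nondegenerate) (halt : ω.IsAlt) (hS : ∀ a, ω.IsSkewAdjoint (S a))
    (hB : ∀ a u v w, ricciTypeTensor ω (S a) u v w + ricciTypeTensor ω (S u) v a w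
      + ricciTypeTensor ω (S v) a u w = 0) (u v w : V) :
    (Module.finrank K V + 1) * (ω (S u v) w - ω (S v u) w) =
      ω u w * LinearMap.trace K V (S.flip v) - ω v w * LinearMap.trace K V (S.flip u)
        + 2 * ω u v * LinearMap.trace K V (S.flip w) := by
  have hsum : ω u w • S.flip v + ((ω.flip v).comp (S.flip w)).smulRight u
      - ω v w • S.flip u - ((ω.flip u).comp (S.flip w)).smulRight v + (2 * ω u v) • S.flip w
      = ricciTypeTensorLeft ω (S u) v w - ricciTypeTensorLeft ω (S v) u w := by
    ext a
    have h := hB a u v w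
    rw [ricciTypeTensor_swap halt v a, ricciTypeTensor] at h
    simp only [LinearMap.sub_apply, LinearMap.smul_apply, LinearMap.smulRight_apply,
      LinearMap.add_apply, LinearMap.comp_apply, LinearMap.flip_apply,
      LinearMap.BilinForm.flip_apply, ricciTypeTensorLeft_apply]
    linear_combination (norm := module) h
  have htrace := congrArg (LinearMap.trace K V) hsum
  simp only [map_sub, map_add, map_smul, LinearMap.trace_smulRight, smul_eq_mul,
    trace_ricciTypeTensorLeft hω halt (hS _), LinearMap.BilinForm.flip_apply, LinearMap.comp_apply,
    LinearMap.flip_apply, (isSkewAdjoint_iff_of_isAlt halt).1 (hS _) w] at htrace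
  linear_combination -htrace

end Algebra

-- The default depth does not reach the norm on triply nested continuous linear maps.
set_option maxSynthPendingDepth 3

section Calculus

open scoped ContDiff

variable {F G : Type*} [NormedAddCommGroup F] [NormedSpace ℝ F]
  [NormedAddCommGroup G] [NormedSpace ℝ G]

theorem hasFDerivAt_clm_apply_const {B : E → F →L[ℝ] G} {x : E} (hB : DifferentiableAt ℝ B x)
    (u : F) : HasFDerivAt (fun y => B y u) ((fderiv ℝ B x).flip u) x := by
  simpa using hB.hasFDerivAt.clm_apply (hasFDerivAt_const u x)

theorem hasFDerivAt_clm_apply_const₂ {H : Type*} [NormedAddCommGroup H] [NormedSpace ℝ H]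
    {B : E → F →L[ℝ] G →L[ℝ] H} {x : E} (hB : DifferentiableAt ℝ B x) (u : F) (v : G) :
    HasFDerivAt (fun y => B y u v) (((fderiv ℝ B x).flip u).flip v) x := by
  simpa using (hasFDerivAt_clm_apply_const hB u).clm_apply (hasFDerivAt_const v x)

theorem fderiv_fderiv_comm {f : E → F} (hf : ContDiff ℝ ∞ f) (x u v : E) :
    fderiv ℝ (fderiv ℝ f) x u v = fderiv ℝ (fderiv ℝ f) x v u := by
  refine (hf.contDiffAt.isSymmSndFDerivAt ?_).eq u v
  rw [minSmoothness_of_isRCLikeNormedField]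
  exact WithTop.coe_le_coe.2 le_top

end Calculus

namespace SympForm

open scoped ContDiff

theorem differentiable (Ω : SympForm E) : Differentiable ℝ Ω.ω :=
  Ω.smooth.differentiable (by simp)

theorem isAlt (Ω : SympForm E) (x : E) : (Ω.ω x).toBilinForm.IsAlt :=
  fun u => self_eq_neg.1 (Ω.skew x u u)

theorem nondegenerate (Ω : SympForm E) (x : E) : (Ω.ω x).toBilinForm.Nondegenerate :=
  (Ω.isAlt x).isRefl.nondegenerate_iff_separatingLeft.2 (Ω.nondeg x)

theorem ext_left (Ω : SympForm E) (x : E) {u v : E} (h : ∀ z, Ω.ω x u z = Ω.ω x v z) : u = v :=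
  sub_eq_zero.1 <| Ω.nondeg x _ fun z => by rw [map_sub, sub_apply, h, sub_self]

variable [FiniteDimensional ℝ E]

theorem isInvertible (Ω : SympForm E) (x : E) : (Ω.ω x).IsInvertible :=
  ⟨(((Ω.ω x).toBilinForm.toDual (Ω.nondegenerate x)).trans
    LinearMap.toContinuousLinearMap).toContinuousLinearEquiv, rfl⟩

theorem contDiff_inverse (Ω : SympForm E) : ContDiff ℝ ∞ fun x => (Ω.ω x).inverse :=
  contDiff_iff_contDiffAt.2 fun x =>
    (Ω.isInvertible x).contDiffAt_map_inverse.comp x Ω.smooth.contDiffAt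

end SympForm

section Curvature

open scoped ContDiff

variable {Ω : SympForm E} (C : SympConnection Ω)

theorem SympConnection.differentiable : Differentiable ℝ C.Γ :=
  C.smooth.differentiable (by simp)

theorem SympConnection.contDiff_fderiv : ContDiff ℝ ∞ (fderiv ℝ C.Γ) :=
  (contDiff_infty_iff_fderiv.1 C.smooth).2

theorem SympConnection.fderiv_symm (x a u v : E) :
    fderiv ℝ C.Γ x a u v = fderiv ℝ C.Γ x a v u := by
  have h := hasFDerivAt_clm_apply_const₂ (C.differentiable x)
  have hsymm : (fun y => C.Γ y u v) = fun y => C.Γ y v u := funext fun y => C.symm y u v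
  exact congrArg (· a) ((h u v).unique (hsymm ▸ h v u))

theorem curvOp_swap (x u v : E) : curvOp C x v u = -curvOp C x u v := by
  rw [curvOp, curvOp]
  abel

theorem first_bianchi (x u v w : E) :
    curvOp C x u v w + curvOp C x v w u + curvOp C x w u v = 0 := by
  simp only [curvOp, add_apply, sub_apply, ContinuousLinearMap.comp_apply, C.fderiv_symm x u w v,
    C.fderiv_symm x v w u, C.fderiv_symm x w v u, C.symm x w v, C.symm x w u, C.symm x v u]
  abel

theorem contDiff_curvOp (u v : E) : ContDiff ℝ ∞ fun x => curvOp C x u v := by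
  have hΓ : ∀ w, ContDiff ℝ ∞ fun x => C.Γ x w := fun w => C.smooth.clm_apply contDiff_const
  have hdΓ : ∀ w z, ContDiff ℝ ∞ fun x => fderiv ℝ C.Γ x w z := fun w z =>
    (C.contDiff_fderiv.clm_apply contDiff_const).clm_apply contDiff_const
  exact (((hdΓ u v).sub (hdΓ v u)).add ((hΓ u).clm_comp (hΓ v))).sub ((hΓ v).clm_comp (hΓ u))

-- Antisymmetrizing the second derivatives of a parallel `B` leaves the curvature acting on `B`.
theorem curvOp_skew_of_parallel {B : E → E →L[ℝ] E →L[ℝ] ℝ} (hB : ContDiff ℝ ∞ B)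
    (hpar : ∀ x u v w, fderiv ℝ B x u v w = B x (C.Γ x u v) w + B x v (C.Γ x u w))
    (x u v w z : E) : B x (curvOp C x u v w) z + B x w (curvOp C x u v z) = 0 := by
  have hdB : DifferentiableAt ℝ (fderiv ℝ B) x :=
    (contDiff_infty_iff_fderiv.1 hB).2.differentiable (by simp) x
  have hBx : DifferentiableAt ℝ B x := hB.differentiable (by simp) x
  have hΓ := hasFDerivAt_clm_apply_const (C.differentiable x)
  have hsnd : ∀ p q, fderiv ℝ (fderiv ℝ B) x p q w z =
      fderiv ℝ B x p (C.Γ x q w) z + B x (fderiv ℝ C.Γ x p q w) z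
        + (fderiv ℝ B x p w (C.Γ x q z) + B x w (fderiv ℝ C.Γ x p q z)) := fun p q => by
    have hleft := (hasFDerivAt_clm_apply_const₂ hdB q w).clm_apply (hasFDerivAt_const z x)
    have hright := ((hBx.hasFDerivAt.clm_apply ((hΓ q).clm_apply (hasFDerivAt_const w x))).clm_apply
      (hasFDerivAt_const z x)).add ((hBx.hasFDerivAt.clm_apply (hasFDerivAt_const w x)).clm_apply
        ((hΓ q).clm_apply (hasFDerivAt_const z x)))
    have h := congrArg (· p) (hleft.unique (hright.congr_of_eventuallyEq
      (Filter.Eventually.of_forall fun y => hpar y q w z)))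
    simpa [add_comm] using h
  have hsymm := congrArg (· w z) (fderiv_fderiv_comm hB x u v)
  simp only [hsnd, hpar] at hsymm
  simp only [curvOp, add_apply, sub_apply, ContinuousLinearMap.comp_apply, map_add, map_sub]
  linear_combination hsymm

theorem curvOp_isSkewAdjoint (x u v : E) :
    (Ω.ω x).toBilinForm.IsSkewAdjoint (curvOp C x u v).toLinearMap := by
  intro w z
  have h := curvOp_skew_of_parallel C Ω.smooth C.parallel x u v w z
  simpa using eq_neg_of_add_eq_zero_left h

end Curvature

section Ricci

open scoped ContDiff

variable {Ω : SympForm E} (C : SympConnection Ω)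

/-- The curvature operator with its arguments permuted, `u v w ↦ R(w, u)v`, so that the Ricci
tensor is its trace in the last argument. -/
noncomputable def curvOpLeft (x : E) : E →ₗ[ℝ] E →ₗ[ℝ] E →L[ℝ] E :=
  LinearMap.mk₂ ℝ (fun u v => ((fderiv ℝ C.Γ x).flip u).flip v - ((fderiv ℝ C.Γ x) u).flip v
      + (C.Γ x).flip (C.Γ x u v) - (C.Γ x u).comp ((C.Γ x).flip v))
    (fun u u' v => by ext w; simp; abel)
    (fun c u v => by ext w; simp [smul_sub])
    (fun u v v' => by ext w; simp; abel)
    (fun c u v => by ext w; simp [smul_sub])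

theorem curvOpLeft_apply (x u v w : E) : curvOpLeft C x u v w = curvOp C x w u v := by
  simp [curvOpLeft, curvOp]

variable [FiniteDimensional ℝ E]

/-- The Ricci tensor as a field of continuous bilinear forms. -/
noncomputable def ricciForm (x : E) : E →L[ℝ] E →L[ℝ] ℝ :=
  ((curvOpLeft C x).compr₂
    (LinearMap.trace ℝ E ∘ₗ ContinuousLinearMap.coeLM ℝ)).toContinuousBilinearMap

theorem ricciForm_apply (x u v : E) : ricciForm C x u v = ricci C x u v := rfl

theorem contDiff_ricciForm : ContDiff ℝ ∞ (ricciForm C) := by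
  refine contDiff_clm_apply_iff.2 fun u => contDiff_clm_apply_iff.2 fun v => ?_
  have hcurv : ContDiff ℝ ∞ fun x => curvOpLeft C x u v := contDiff_clm_apply_iff.2 fun w => by
    simpa only [curvOpLeft_apply] using (contDiff_curvOp C w u).clm_apply contDiff_const
  exact (LinearMap.toContinuousLinearMap
    (LinearMap.trace ℝ E ∘ₗ ContinuousLinearMap.coeLM ℝ)).contDiff.comp hcurv

theorem ricci_symm (x u v : E) : ricci C x u v = ricci C x v u := by
  have hbianchi : curvOpLeft C x u v - curvOpLeft C x v u = -curvOp C x u v := by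
    ext w
    have h := first_bianchi C x w u v
    rw [curvOp_swap C x w v, neg_apply] at h
    simp only [sub_apply, neg_apply, curvOpLeft_apply]
    linear_combination (norm := abel) h
  have htrace := congrArg (fun L : E →L[ℝ] E => LinearMap.trace ℝ E L.toLinearMap) hbianchi
  simp only [ContinuousLinearMap.toLinearMap_sub, ContinuousLinearMap.toLinearMap_neg, map_sub,
    map_neg, trace_eq_zero_of_isSkewAdjoint (Ω.nondegenerate x) (curvOp_isSkewAdjoint C x u v)]
    at htrace
  rwa [neg_zero, sub_eq_zero] at htrace

theorem covDerivRic_eq_fderiv_ricciForm (x a u v : E) :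
    covDerivRic C x a u v = fderiv ℝ (ricciForm C) x a u v - ricciForm C x (C.Γ x a u) v
      - ricciForm C x u (C.Γ x a v) := by
  have hderiv : fderiv ℝ (fun y => ricci C y u v) x = _ :=
    (hasFDerivAt_clm_apply_const₂ ((contDiff_ricciForm C).differentiable (by simp) x) u v).fderiv
  rw [covDerivRic, hderiv]
  simp [ricciForm_apply]

theorem covDerivRic_symm (x a u v : E) : covDerivRic C x a u v = covDerivRic C x a v u := by
  have h : (fun y => ricci C y u v) = fun y => ricci C y v u := funext fun y => ricci_symm C y u v
  rw [covDerivRic, covDerivRic, h, ricci_symm C x _ v, ricci_symm C x u]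
  ring

end Ricci

section RicciEndomorphism

open scoped ContDiff

variable [FiniteDimensional ℝ E] {Ω : SympForm E} (C : SympConnection Ω)

/-- The Ricci endomorphism `R_i^j`, encoded as the field `A` with `Ω(A u, v) = Ric(u, v)`; the
inverse is the genuine one because `Ω` is nondegenerate. -/
noncomputable def ricciEnd (x : E) : E →L[ℝ] E :=
  (Ω.ω x).inverse.comp (ricciForm C x)

theorem ricciEnd_flat (x u v : E) : Ω.ω x (ricciEnd C x u) v = ricci C x u v := by
  rw [ricciEnd, ContinuousLinearMap.comp_apply, (Ω.isInvertible x).self_apply_inverse,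
    ricciForm_apply]

theorem contDiff_ricciEnd : ContDiff ℝ ∞ (ricciEnd C) :=
  Ω.contDiff_inverse.clm_comp (contDiff_ricciForm C)

theorem isSkewAdjoint_ricciEnd (x : E) :
    (Ω.ω x).toBilinForm.IsSkewAdjoint (ricciEnd C x).toLinearMap :=
  (isSkewAdjoint_iff_of_isAlt (Ω.isAlt x)).2 fun u v => by
    simpa [ricciEnd_flat] using ricci_symm C x u v

/-- The covariant derivative `a ↦ ∇_a A` of the Ricci endomorphism `A`, that is
`∂_a A + [Γ_a, A]`. -/
noncomputable def covDerivRicciEnd (x : E) : E →ₗ[ℝ] Module.End ℝ E where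
  toFun a := (fderiv ℝ (ricciEnd C) x a + (C.Γ x a).comp (ricciEnd C x)
    - (ricciEnd C x).comp (C.Γ x a)).toLinearMap
  map_add' a b := by ext u; simp; abel
  map_smul' c a := by ext u; simp [smul_sub]

theorem covDerivRicciEnd_apply (x a u : E) :
    covDerivRicciEnd C x a u = fderiv ℝ (ricciEnd C) x a u + C.Γ x a (ricciEnd C x u)
      - ricciEnd C x (C.Γ x a u) := rfl

theorem covDerivRicciEnd_flat (x a u v : E) :
    Ω.ω x (covDerivRicciEnd C x a u) v = covDerivRic C x a u v := by
  have hd := (contDiff_ricciEnd C).differentiable (by simp) x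
  have h := (((Ω.differentiable x).hasFDerivAt.clm_apply
    (hasFDerivAt_clm_apply_const hd u)).clm_apply (hasFDerivAt_const v x)).fderiv
  simp only [covDerivRic, ← ricciEnd_flat]
  rw [h]
  simp only [covDerivRicciEnd_apply, map_sub, map_add, sub_apply, add_apply,
    ContinuousLinearMap.comp_zero, ContinuousLinearMap.flip_add, zero_add,
    ContinuousLinearMap.flip_apply, ContinuousLinearMap.comp_apply, C.parallel]
  ring

theorem isSkewAdjoint_covDerivRicciEnd (x a : E) :
    (Ω.ω x).toBilinForm.IsSkewAdjoint (covDerivRicciEnd C x a) :=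
  (isSkewAdjoint_iff_of_isAlt (Ω.isAlt x)).2 fun u v => by
    simpa [covDerivRicciEnd_flat] using covDerivRic_symm C x a u v

variable {C}

theorem parallelRicci_iff_covDerivRicciEnd_eq_zero :
    ParallelRicci C ↔ ∀ x a, covDerivRicciEnd C x a = 0 := by
  refine forall₂_congr fun x a => ⟨fun h => ?_, fun h u v => ?_⟩
  · ext u
    exact Ω.nondeg x _ fun v => by rw [covDerivRicciEnd_flat, h]
  · rw [← covDerivRicciEnd_flat, h]
    simp

theorem ParallelRicci.ricciEnd_curvOp_comm (h : ParallelRicci C) (x u v w : E) :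
    ricciEnd C x (curvOp C x u v w) = curvOp C x u v (ricciEnd C x w) := by
  refine Ω.ext_left x fun z => ?_
  have hpar : ∀ x a u v, fderiv ℝ (ricciForm C) x a u v =
      ricciForm C x (C.Γ x a u) v + ricciForm C x u (C.Γ x a v) := fun x a u v => by
    have hx := h x a u v
    rw [covDerivRic_eq_fderiv_ricciForm] at hx
    linear_combination hx
  have hric := curvOp_skew_of_parallel C (contDiff_ricciForm C) hpar x u v w z
  have hω := curvOp_skew_of_parallel C Ω.smooth C.parallel x u v (ricciEnd C x w) z
  simp only [ricciForm_apply, ← ricciEnd_flat] at hric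
  linear_combination hric - hω

theorem rhoZero_iff_trace_covDerivRicciEnd_flip_eq_zero :
    RhoZero C ↔ ∀ x u, LinearMap.trace ℝ E ((covDerivRicciEnd C x).flip u) = 0 := by
  refine forall₂_congr fun x u => ⟨fun h => h _ fun a v => covDerivRicciEnd_flat C x a u v,
    fun h D hD => ?_⟩
  have hflip : D = (covDerivRicciEnd C x).flip u := LinearMap.ext fun a =>
    Ω.ext_left x fun v => (hD a v).trans (covDerivRicciEnd_flat C x a u v).symm
  rw [hflip, h]

theorem ParallelRicci.trace_ricciEnd_sq_eq (h : ParallelRicci C) (x y : E) :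
    LinearMap.trace ℝ E ((ricciEnd C x).toLinearMap * (ricciEnd C x).toLinearMap) =
      LinearMap.trace ℝ E ((ricciEnd C y).toLinearMap * (ricciEnd C y).toLinearMap) := by
  let τ : (E →L[ℝ] E) →L[ℝ] ℝ := LinearMap.toContinuousLinearMap
    (LinearMap.trace ℝ E ∘ₗ ContinuousLinearMap.coeLM ℝ)
  have hd := fun z => ((contDiff_ricciEnd C).differentiable (by simp) z).hasFDerivAt
  have hτ := fun z => τ.hasFDerivAt.comp z ((hd z).clm_comp (hd z))
  refine is_const_of_fderiv_eq_zero (fun z => (hτ z).differentiableAt) (fun z => ?_) x y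
  ext a
  have hcomm : (fderiv ℝ (ricciEnd C) z a).toLinearMap =
      (ricciEnd C z).toLinearMap * (C.Γ z a).toLinearMap
        - (C.Γ z a).toLinearMap * (ricciEnd C z).toLinearMap := by
    ext u
    have hz := LinearMap.congr_fun (parallelRicci_iff_covDerivRicciEnd_eq_zero.1 h z a) u
    rw [covDerivRicciEnd_apply, LinearMap.zero_apply] at hz
    simp only [LinearMap.sub_apply, Module.End.mul_apply, ContinuousLinearMap.coe_coe]
    linear_combination (norm := module) hz
  rw [(hτ z).fderiv]
  change LinearMap.trace ℝ E ((ricciEnd C z).toLinearMap * (fderiv ℝ (ricciEnd C) z a).toLinearMap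
    + (fderiv ℝ (ricciEnd C) z a).toLinearMap * (ricciEnd C z).toLinearMap) = 0
  rw [hcomm, mul_sub, sub_mul, ← mul_assoc, mul_assoc _ (C.Γ z a).toLinearMap, sub_add_sub_cancel,
    map_sub, sub_eq_zero, LinearMap.trace_mul_comm, mul_assoc]

end RicciEndomorphism

section SecondBianchi

variable {Ω : SympForm E} (C : SympConnection Ω)

theorem fderiv_curvOp (x a u v : E) :
    fderiv ℝ (fun y => curvOp C y u v) x a =
      fderiv ℝ (fderiv ℝ C.Γ) x a u v - fderiv ℝ (fderiv ℝ C.Γ) x a v u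
      + (C.Γ x u).comp (fderiv ℝ C.Γ x a v) + (fderiv ℝ C.Γ x a u).comp (C.Γ x v)
      - (C.Γ x v).comp (fderiv ℝ C.Γ x a u) - (fderiv ℝ C.Γ x a v).comp (C.Γ x u) := by
  have hΓ := hasFDerivAt_clm_apply_const (C.differentiable x)
  have hdΓ := hasFDerivAt_clm_apply_const₂ (C.contDiff_fderiv.differentiable (by simp) x)
  have h : fderiv ℝ (fun y => curvOp C y u v) x = _ :=
    ((((hdΓ u v).sub (hdΓ v u)).add ((hΓ u).clm_comp (hΓ v))).sub
      ((hΓ v).clm_comp (hΓ u))).fderiv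
  rw [h]
  simp only [sub_apply, add_apply, ContinuousLinearMap.flip_apply, ContinuousLinearMap.comp_apply,
    ContinuousLinearMap.compL_apply]
  abel

theorem covDerivR_eq (x a u v w z : E) :
    covDerivR C x a u v w z = Ω.ω x (fderiv ℝ (fun y => curvOp C y u v) x a w
      + C.Γ x a (curvOp C x u v w) - curvOp C x (C.Γ x a u) v w - curvOp C x u (C.Γ x a v) w
      - curvOp C x u v (C.Γ x a w)) z := by
  have hcurv := (contDiff_curvOp C u v).differentiable (by simp) x
  have h : fderiv ℝ (fun y => Rlow C y u v w z) x = _ :=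
    (((Ω.differentiable x).hasFDerivAt.clm_apply (hasFDerivAt_clm_apply_const hcurv w)).clm_apply
      (hasFDerivAt_const z x)).fderiv
  rw [covDerivR, h]
  simp only [Rlow, C.parallel, ContinuousLinearMap.comp_zero, ContinuousLinearMap.flip_add,
    ContinuousLinearMap.flip_apply, ContinuousLinearMap.comp_apply, map_sub, map_add, sub_apply,
    add_apply, zero_add]
  ring

theorem second_bianchi (x a u v w z : E) :
    covDerivR C x a u v w z + covDerivR C x u v a w z + covDerivR C x v a u w z = 0 := by
  have hcomm := fderiv_fderiv_comm C.smooth x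
  simp only [covDerivR_eq, ← add_apply, ← map_add]
  convert_to Ω.ω x 0 z = 0 using 3
  · rw [fderiv_curvOp, fderiv_curvOp, fderiv_curvOp, C.symm x v a, C.symm x u a, C.symm x v u,
      curvOp_swap C x u (C.Γ x a v), curvOp_swap C x v (C.Γ x a u), curvOp_swap C x a (C.Γ x u v),
      hcomm u a, hcomm v a, hcomm v u]
    simp only [curvOp, ContinuousLinearMap.comp_apply, map_sub, map_add, sub_apply, add_apply,
      neg_sub]
    abel
  · simp

end SecondBianchi

section WeylFlat

variable [FiniteDimensional ℝ E] {n : ℕ} {Ω : SympForm E} {C : SympConnection Ω}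

theorem WeylFlat.curvOp_eq (hW : WeylFlat n C) (x u v w : E) :
    curvOp C x u v w = (1 / (2 * ((n : ℝ) + 1))) •
      ricciTypeTensor (Ω.ω x).toBilinForm (ricciEnd C x).toLinearMap u v w := by
  have hn : (n : ℝ) + 1 ≠ 0 := by positivity
  refine Ω.ext_left x fun z => ?_
  have h := sub_eq_zero.1 (hW x u v w z)
  rw [Rlow] at h
  rw [h]
  simp only [ricciTypeTensor, ricciEnd_flat, ricci_symm C x z,
    ContinuousLinearMap.toBilinForm_apply, ContinuousLinearMap.coe_coe, map_add, map_sub, map_smul,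
    add_apply, sub_apply, smul_apply, smul_eq_mul]
  field_simp
  ring

theorem WeylFlat.covDerivR_eq (hW : WeylFlat n C) (x a u v w z : E) :
    covDerivR C x a u v w z = 1 / (2 * ((n : ℝ) + 1)) *
      Ω.ω x (ricciTypeTensor (Ω.ω x).toBilinForm (covDerivRicciEnd C x a) u v w) z := by
  have hω := hasFDerivAt_clm_apply_const₂ (Ω.differentiable x)
  have hric : ∀ u v, HasFDerivAt (fun y => ricci C y u v) _ x :=
    hasFDerivAt_clm_apply_const₂ ((contDiff_ricciForm C).differentiable (by simp) x)
  have hR : ∀ y u v w z, Rlow C y u v w z = 1 / (2 * ((n : ℝ) + 1)) *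
      (Ω.ω y u w * ricci C y v z + ricci C y w v * Ω.ω y u z - Ω.ω y v w * ricci C y u z
        - ricci C y w u * Ω.ω y v z + 2 * (Ω.ω y u v * ricci C y w z)) := fun y u v w z => by
    rw [Rlow, hW.curvOp_eq]
    simp only [ricciTypeTensor, ricciEnd_flat, ContinuousLinearMap.toBilinForm_apply,
      ContinuousLinearMap.coe_coe, map_add, map_sub, map_smul, add_apply, sub_apply, smul_apply,
      smul_eq_mul]
    ring
  have hd : HasFDerivAt (fun y => Rlow C y u v w z) _ x :=
    (((((((hω u w).mul (hric v z)).add ((hric w v).mul (hω u z))).sub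
      ((hω v w).mul (hric u z))).sub ((hric w u).mul (hω v z))).add
      (((hω u v).mul (hric w z)).const_mul 2)).const_mul
      (1 / (2 * ((n : ℝ) + 1)))).congr_of_eventuallyEq
      (Filter.Eventually.of_forall fun y => hR y u v w z)
  rw [covDerivR, hd.fderiv]
  simp only [ricciTypeTensor, hR, covDerivRicciEnd_flat, covDerivRic_eq_fderiv_ricciForm,
    ricciForm_apply, C.parallel, ContinuousLinearMap.toBilinForm_apply,
    ContinuousLinearMap.flip_apply, map_add, map_sub, map_smul, add_apply, sub_apply, smul_apply,
    smul_eq_mul]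
  ring

end WeylFlat

section MainTheorem

variable [FiniteDimensional ℝ E] {n : ℕ} {Ω : SympForm E} {C : SympConnection Ω}

theorem WeylFlat.parallelRicci_iff_locallySymmetric (hW : WeylFlat n C) :
    ParallelRicci C ↔ LocallySymmetric C := by
  rw [parallelRicci_iff_covDerivRicciEnd_eq_zero]
  refine ⟨fun h x a u v w z => ?_, fun h x a => ?_⟩
  · simp [hW.covDerivR_eq, h, ricciTypeTensor]
  · refine eq_zero_of_ricciTypeTensor_eq_zero (Ω.nondegenerate x) (Ω.isAlt x)
      (isSkewAdjoint_covDerivRicciEnd C x a) fun u v w => Ω.nondeg x _ fun z => ?_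
    have hz := h x a u v w z
    rw [hW.covDerivR_eq] at hz
    exact (mul_eq_zero.1 hz).resolve_left (by positivity)

theorem WeylFlat.covDerivRic_comm_of_rhoZero (hW : WeylFlat n C) (hρ : RhoZero C) (x u v w : E) :
    covDerivRic C x u v w = covDerivRic C x v u w := by
  have hbianchi : ∀ a u v w,
      ricciTypeTensor (Ω.ω x).toBilinForm (covDerivRicciEnd C x a) u v w
        + ricciTypeTensor (Ω.ω x).toBilinForm (covDerivRicciEnd C x u) v a w
        + ricciTypeTensor (Ω.ω x).toBilinForm (covDerivRicciEnd C x v) a u w = 0 :=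
    fun a u v w => Ω.nondeg x _ fun z => by
      have hz := second_bianchi C x a u v w z
      simp only [hW.covDerivR_eq, ← mul_add, ← add_apply, ← map_add] at hz
      exact (mul_eq_zero.1 hz).resolve_left (by positivity)
  have htrace := contracted_bianchi (Ω.nondegenerate x) (Ω.isAlt x)
    (isSkewAdjoint_covDerivRicciEnd C x) hbianchi u v w
  simp only [rhoZero_iff_trace_covDerivRicciEnd_flip_eq_zero.1 hρ x, mul_zero, sub_zero, add_zero,
    ContinuousLinearMap.toBilinForm_apply, covDerivRicciEnd_flat, mul_eq_zero] at htrace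
  exact sub_eq_zero.1 (htrace.resolve_left (by positivity))

theorem WeylFlat.rhoZero_iff_parallelRicci (hW : WeylFlat n C) (hpref : Preferred C) :
    RhoZero C ↔ ParallelRicci C := by
  refine ⟨fun hρ x u v w => ?_, fun h => ?_⟩
  · have hleft := hW.covDerivRic_comm_of_rhoZero hρ x
    have hright := covDerivRic_symm C x
    linear_combination (hpref x u v w + hleft u v w + hright v u w + hleft u w v
      + hright u v w) / 3
  · rw [parallelRicci_iff_covDerivRicciEnd_eq_zero] at h
    refine rhoZero_iff_trace_covDerivRicciEnd_flip_eq_zero.2 fun x u => ?_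
    have hflip : (covDerivRicciEnd C x).flip u = 0 := LinearMap.ext fun a => by simp [h x a]
    rw [hflip, map_zero]

theorem WeylFlat.finrank_smul_ricciEnd_sq (hW : WeylFlat n C) (h : ParallelRicci C) (x : E) :
    (Module.finrank ℝ E : ℝ) • ((ricciEnd C x).toLinearMap * (ricciEnd C x).toLinearMap) =
      LinearMap.trace ℝ E ((ricciEnd C x).toLinearMap * (ricciEnd C x).toLinearMap) • 1 := by
  have hc : 1 / (2 * ((n : ℝ) + 1)) ≠ 0 := by positivity
  refine finrank_smul_sq_eq_trace_smul_one (Ω.nondegenerate x) (Ω.isAlt x)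
    (isSkewAdjoint_ricciEnd C x) fun u v w => ?_
  have hcomm := h.ricciEnd_curvOp_comm x u v w
  rw [hW.curvOp_eq, hW.curvOp_eq, map_smul] at hcomm
  exact smul_right_injective E hc hcomm

end MainTheorem

/-- For a symplectically flat symplectic connection (vanishing symplectic Weyl
tensor and `∇_{(i}R_{jk)} = 0`) on a `2n`-dimensional symplectic manifold, the following are
equivalent: (1) the curvature one-form `ρ_i = ∇^p R_{ip}` vanishes; (2) the Ricci tensor is
parallel; (3) `∇` is locally symmetric.  Moreover, when these hold, the Ricci endomorphism
`A` (characterized by `Ω(A u, v) = Ric(u,v)`) satisfies `A ∘ A = -r • id` for a constant `r`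
with `2nr = R_{pq}R^{pq}` (the latter being `-tr(A ∘ A)` for any linear packaging `B` of `A`). -/
theorem statement_1 {E : Type*} [NormedAddCommGroup E] [NormedSpace ℝ E]
    [FiniteDimensional ℝ E]
    (n : ℕ) (hn : 1 ≤ n) (hdim : Module.finrank ℝ E = 2 * n)
    (Ω : SympForm E) (C : SympConnection Ω)
    (hW : WeylFlat n C) (hpref : Preferred C) :
    ((RhoZero C ↔ ParallelRicci C) ∧ (ParallelRicci C ↔ LocallySymmetric C))
    ∧ (RhoZero C →
        ∀ A : E → E → E, (∀ x u v, Ω.ω x (A x u) v = ricci C x u v) →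
        ∃ r : ℝ, (∀ x u, A x (A x u) = -r • u) ∧
          ∀ x, ∀ B : E →ₗ[ℝ] E, (∀ u, B u = A x u) →
            2 * (n : ℝ) * r = - LinearMap.trace ℝ E (B ∘ₗ B)) := by
  refine ⟨⟨hW.rhoZero_iff_parallelRicci hpref, hW.parallelRicci_iff_locallySymmetric⟩,
    fun hρ A hA => ?_⟩
  have hpar := (hW.rhoZero_iff_parallelRicci hpref).1 hρ
  obtain rfl : A = fun x u => ricciEnd C x u := funext₂ fun x u =>
    Ω.ext_left x fun v => (hA x u v).trans (ricciEnd_flat C x u v).symm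
  let τ : ℝ := LinearMap.trace ℝ E ((ricciEnd C 0).toLinearMap * (ricciEnd C 0).toLinearMap)
  have hτ := hpar.trace_ricciEnd_sq_eq 0
  have hn' : (2 * n : ℝ) ≠ 0 := by positivity
  refine ⟨-τ / (2 * n), fun x u => ?_, fun x B hB => ?_⟩
  · have hsq := LinearMap.congr_fun (hW.finrank_smul_ricciEnd_sq hpar x) u
    rw [← hτ, hdim] at hsq
    push_cast at hsq
    rw [neg_div, neg_neg, div_eq_inv_mul, mul_smul]
    exact (eq_inv_smul_iff₀ hn').2 hsq
  · obtain rfl : B = (ricciEnd C x).toLinearMap := LinearMap.ext hB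
    rw [mul_div_cancel₀ _ hn', neg_inj]
    exact hτ x
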